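/- arXiv:1205.4904 — 3 statements merged into one kernel-verified Lean document; each statement's English description precedes it below -/
import Mathlib

section
/- For every multi-index $w\in\mathbb{N}^4$, every $q\in\mathbb{R}^4$, every $\Lambda>0$ and every $m\ge 0$, the partial derivatives of the Gaussian satisfy $\Big|\partial^w_q\, e^{-\frac{|q|^2+m^2}{\Lambda^2}}\Big| \;\le\; 1.087\;\Lambda^{-|w|}\,\sqrt{|w|!}\;2^{|w|/2}\; e^{-\frac{|q|^2}{2\Lambda^2}}\, e^{-\frac{m^2}{\Lambda^2}}$, where $\partial^w_q:=\prod_{\mu=1}^{4}\big(\partial/\partial q_\mu\big)^{w_\mu}$. -/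
/-- The partial derivative `∂/∂q_μ` of a function on `ℝ⁴` (Euclidean). -/
noncomputable def pderiv4 (μ : Fin 4) (f : EuclideanSpace ℝ (Fin 4) → ℝ) :
    EuclideanSpace ℝ (Fin 4) → ℝ :=
  fun q => fderiv ℝ f q (EuclideanSpace.single μ 1)

/-- The multi-index partial derivative `∂^w = ∏_μ (∂/∂q_μ)^{w_μ}` on functions on `ℝ⁴`. -/
noncomputable def mderiv4 (w : Fin 4 → ℕ) (f : EuclideanSpace ℝ (Fin 4) → ℝ) :
    EuclideanSpace ℝ (Fin 4) → ℝ :=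
  (pderiv4 3)^[w 3] <| (pderiv4 2)^[w 2] <| (pderiv4 1)^[w 1] <| (pderiv4 0)^[w 0] f


/-- Physicist Hermite polynomials as functions. -/
noncomputable def hh : ℕ → ℝ → ℝ
  | 0, _ => 1
  | 1, x => 2 * x
  | (n + 2), x => 2 * x * hh (n + 1) x - 2 * (n + 1) * hh n x

theorem hh_zero (x : ℝ) : hh 0 x = 1 := by rw [hh]
theorem hh_one (x : ℝ) : hh 1 x = 2 * x := by rw [hh]
theorem hh_add_two (n : ℕ) (x : ℝ) :
    hh (n + 2) x = 2 * x * hh (n + 1) x - 2 * (n + 1) * hh n x := by rw [hh]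

theorem hh_hasDerivAt (n : ℕ) : (∀ x, HasDerivAt (hh n) (2 * n * hh (n - 1) x) x) ∧
    (∀ x, HasDerivAt (hh (n + 1)) (2 * (n + 1) * hh n x) x) := by
  induction n with
  | zero =>
    constructor
    · intro x
      have : hh 0 = fun _ => (1 : ℝ) := by funext y; exact hh_zero y
      rw [this]; simpa using hasDerivAt_const x (1 : ℝ)
    · intro x
      have : hh 1 = fun y => 2 * y := by funext y; exact hh_one y
      rw [zero_add, this, hh_zero]
      simpa using (hasDerivAt_id x).const_mul 2
  | succ n ih =>
    refine ⟨fun x => by simpa using ih.2 x, fun x => ?_⟩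
    have e : hh (n + 1 + 1) = fun y => 2 * y * hh (n + 1) y - 2 * (n + 1) * hh n y := by
      funext y; exact hh_add_two n y
    rw [e]
    have h1 := (((hasDerivAt_id x).const_mul 2).mul (ih.2 x)).sub
      ((ih.1 x).const_mul (2 * (n + 1 : ℝ)))
    refine h1.congr_deriv ?_
    cases n with
    | zero => simp [hh_zero, hh_one]; ring
    | succ k =>
      have := hh_add_two k x
      simp only [id, Nat.add_sub_cancel] at *
      push_cast
      rw [this]; ring

theorem hh_deriv (n : ℕ) (x : ℝ) : HasDerivAt (hh n) (2 * n * hh (n - 1) x) x :=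
  (hh_hasDerivAt n).1 x

theorem hh_rec (n : ℕ) (x : ℝ) : hh (n + 1) x = 2 * x * hh n x - 2 * n * hh (n - 1) x := by
  cases n with
  | zero => simp [hh_zero, hh_one]
  | succ k => simpa using hh_add_two k x

theorem hh_neg (n : ℕ) (x : ℝ) : |hh n (-x)| = |hh n x| := by
  have : hh n (-x) = (-1) ^ n * hh n x := by
    induction n using Nat.twoStepInduction with
    | zero => simp [hh_zero]
    | one => simp [hh_one]
    | more n h1 h2 => rw [hh_add_two, hh_add_two, h1, h2]; ring
  rw [this, abs_mul]; simp

theorem hh_at_zero (n : ℕ) :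
    (hh n 0 ^ 2) ^ 2 * (3 / 2 * n + 1) ≤ (2 ^ n * (n.factorial : ℝ)) ^ 2 := by
  induction n using Nat.twoStepInduction with
  | zero => simp [hh_zero]
  | one => simp [hh_one]
  | more n h1 _ =>
    have e : hh (n + 2) 0 = - (2 * (n + 1) * hh n 0) := by rw [hh_add_two]; ring
    rw [e, Nat.factorial_succ, Nat.factorial_succ]
    push_cast
    set H := hh n 0
    set f := (n.factorial : ℝ)
    have hn : (0 : ℝ) ≤ n := Nat.cast_nonneg n
    set v := (n : ℝ)
    have k1 : ((-(2 * (v + 1) * H)) ^ 2) ^ 2 * (3 / 2 * (v + 2) + 1)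
        = 16 * (v + 1) ^ 2 * (H ^ 2) ^ 2 * ((v + 1) ^ 2 * (3 / 2 * v + 4)) := by ring
    have k2 : (v + 1) ^ 2 * (3 / 2 * v + 4) ≤ (v + 2) ^ 2 * (3 / 2 * v + 1) := by nlinarith
    have k3 : (2 ^ (n + 2) * ((v + 1 + 1) * ((v + 1) * f))) ^ 2
        = 16 * (v + 1) ^ 2 * (v + 2) ^ 2 * (2 ^ n * f) ^ 2 := by ring
    rw [k1, k3]
    calc _ ≤ 16 * (v + 1) ^ 2 * (H ^ 2) ^ 2 * ((v + 2) ^ 2 * (3 / 2 * v + 1)) := by gcongr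
      _ = 16 * (v + 1) ^ 2 * (v + 2) ^ 2 * ((H ^ 2) ^ 2 * (3 / 2 * v + 1)) := by ring
      _ ≤ _ := by gcongr

theorem hh_zero_or (n : ℕ) : hh n 0 = 0 ∨ hh (n + 1) 0 = 0 := by
  induction n with
  | zero => right; simp [hh_one]
  | succ n ih =>
    rcases ih with h | h
    · right; rw [hh_add_two, h]; simp
    · left; exact h

/-- Behaviour beyond `√(2n+1)` for index `n+1`. -/
theorem hh_tail (n : ℕ) (x : ℝ) (hx : 0 < x) (h : 2 * (n : ℝ) + 1 ≤ x ^ 2) :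
    0 < hh (n + 1) x ∧ 2 * (n + 1) * x * hh n x ≤ (2 * n + 1) * hh (n + 1) x := by
  induction n with
  | zero => simp [hh_zero, hh_one, hx]
  | succ n ih =>
    push_cast at h ⊢
    obtain ⟨p, i⟩ := ih (by linarith)
    have hn : (0 : ℝ) ≤ n := Nat.cast_nonneg n
    have e := hh_add_two n x
    have e2 : x * hh (n + 1 + 1) x = 2 * x ^ 2 * hh (n + 1) x - 2 * (n + 1) * x * hh n x := by
      rw [e]; ring
    have k : (2 * x ^ 2 - (2 * n + 1)) * hh (n + 1) x ≤ x * hh (n + 1 + 1) x := by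
      rw [e2]; linarith
    have k0 : 0 < 2 * x ^ 2 - (2 * n + 1) := by linarith
    have k1 : 0 < x * hh (n + 1 + 1) x := lt_of_lt_of_le (mul_pos k0 p) k
    refine ⟨by exact pos_of_mul_pos_right k1 hx.le, ?_⟩
    refine le_of_mul_le_mul_left ?_ hx
    have k2 : 2 * (n + 2) * x ^ 2 ≤ (2 * n + 3) * (2 * x ^ 2 - (2 * n + 1)) := by nlinarith
    calc x * (2 * (n + 1 + 1) * x * hh (n + 1) x) = (2 * (n + 2) * x ^ 2) * hh (n + 1) x := by ring
      _ ≤ ((2 * n + 3) * (2 * x ^ 2 - (2 * n + 1))) * hh (n + 1) x := by gcongr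
      _ = (2 * n + 3) * ((2 * x ^ 2 - (2 * n + 1)) * hh (n + 1) x) := by ring
      _ ≤ (2 * n + 3) * (x * hh (n + 1 + 1) x) := by gcongr
      _ = _ := by ring

noncomputable def yy (n : ℕ) (x : ℝ) : ℝ := hh n x * Real.exp (-x ^ 2 / 2)
noncomputable def zz (n : ℕ) (x : ℝ) : ℝ :=
  (2 * n * hh (n - 1) x - x * hh n x) * Real.exp (-x ^ 2 / 2)

theorem exp_deriv (x : ℝ) :
    HasDerivAt (fun x : ℝ => Real.exp (-x ^ 2 / 2)) (-x * Real.exp (-x ^ 2 / 2)) x := by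
  have := (((hasDerivAt_id x).pow 2).neg.div_const 2).exp
  refine this.congr_deriv ?_
  simp; ring

theorem yy_deriv (n : ℕ) (x : ℝ) : HasDerivAt (yy n) (zz n x) x := by
  refine ((hh_deriv n x).mul (exp_deriv x)).congr_deriv ?_
  unfold zz; ring

theorem zz_deriv (n : ℕ) (x : ℝ) :
    HasDerivAt (zz n) (-(2 * n + 1 - x ^ 2) * yy n x) x := by
  refine (((((hh_deriv (n - 1) x).const_mul (2 * (n : ℝ)))).sub
    ((hasDerivAt_id x).mul (hh_deriv n x))).mul (exp_deriv x)).congr_deriv ?_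
  unfold yy
  cases n with
  | zero => simp [hh_zero]; ring
  | succ k =>
    have := hh_rec k x
    simp only [id, Nat.add_sub_cancel] at *
    push_cast
    simp [this]; ring

noncomputable def rr (a x : ℝ) : ℝ := (√(a - x ^ 2))⁻¹

theorem rr_deriv (a x : ℝ) (h : 0 < a - x ^ 2) : HasDerivAt (rr a) (x * rr a x ^ 3) x := by
  have h1 : HasDerivAt (fun x : ℝ => a - x ^ 2) (-(2 * x)) x := by
    simpa using ((hasDerivAt_id x).pow 2).const_sub a
  have h0 : √(a - x ^ 2) ≠ 0 := (Real.sqrt_pos.2 h).ne'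
  refine ((h1.sqrt h.ne').inv h0).congr_deriv ?_
  unfold rr
  field_simp

theorem rr_sq (a x : ℝ) (h : 0 < a - x ^ 2) : rr a x ^ 2 * (a - x ^ 2) = 1 := by
  unfold rr
  rw [inv_pow, Real.sq_sqrt h.le, inv_mul_cancel₀ h.ne']

theorem rr_pos (a x : ℝ) (h : 0 < a - x ^ 2) : 0 < rr a x := by
  unfold rr; exact inv_pos.2 (Real.sqrt_pos.2 h)

noncomputable def FF (n : ℕ) (a x : ℝ) : ℝ :=
  ((rr a x ^ 3 + 3 * x ^ 2 * rr a x ^ 5) / 2 + (2 * n + 1 - x ^ 2) * rr a x) * yy n x ^ 2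
    - x * rr a x ^ 3 * (yy n x * zz n x) + rr a x * zz n x ^ 2

theorem FF_deriv (n : ℕ) (d x : ℝ) (h : 0 < (2 * n + 1 + d) - x ^ 2) :
    HasDerivAt (FF n (2 * n + 1 + d))
      (x * rr (2 * n + 1 + d) x ^ 3 * (9 / 2 * rr (2 * n + 1 + d) x ^ 2
        + 15 / 2 * x ^ 2 * rr (2 * n + 1 + d) x ^ 4 - 2 * d) * yy n x ^ 2) x := by
  set a := 2 * (n : ℝ) + 1 + d with ha
  have hr := rr_deriv a x h
  have hy := yy_deriv n x
  have hz := zz_deriv n x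
  have hx := hasDerivAt_id x
  have hx2 := hx.pow 2
  have key := ((((hr.pow 3).add ((hx2.const_mul 3).mul (hr.pow 5))).div_const 2).add
    ((hx2.const_sub (2 * (n : ℝ) + 1)).mul hr)).mul (hy.pow 2)
  have key2 := (key.sub ((hx.mul (hr.pow 3)).mul (hy.mul hz))).add (hr.mul (hz.pow 2))
  refine key2.congr_deriv ?_
  have e := rr_sq a x h
  simp
  have hN : 2 * (n : ℝ) + 1 = a - d := by rw [ha]; ring
  rw [hN]
  set r := rr a x
  set y := yy n x
  set z := zz n x
  linear_combination (2 * x * r * y ^ 2) * e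

theorem delta_exists (N : ℝ) (hN : 3 ≤ N) :
    ∃ d : ℝ, 1 ≤ d ∧ 4 * d * (d + 2) ^ 2 - 9 * (d + 2) = 15 * (N - 2) := by
  have hc : ContinuousOn (fun d : ℝ => 4 * d * (d + 2) ^ 2 - 9 * (d + 2)) (Set.Icc 1 N) := by
    fun_prop
  have := intermediate_value_Icc (by linarith) hc
  obtain ⟨d, hd, e⟩ := this (show 15 * (N - 2) ∈ _ from ⟨by norm_num; linarith, by nlinarith⟩)
  exact ⟨d, hd.1, e⟩

theorem key_poly (d t : ℝ) (hd : 1 ≤ d) (ht : 0 ≤ t) :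
    4 * (d + 2 + t) ^ 5 ≤ 3 * ((d + 2) * (1 / 2 + d * (d + 2) / 3) - 3 / 4 * (d + 2 + t)
      + (2 + t) * (d + 2 + t) ^ 2) ^ 2 := by
  obtain ⟨e, rfl⟩ : ∃ e, d = 1 + e := ⟨d - 1, by ring⟩
  have he : 0 ≤ e := by linarith
  rw [← sub_nonneg]
  ring_nf
  positivity

theorem FF_zero (n : ℕ) (hn : 1 ≤ n) (d : ℝ) (hd : 1 ≤ d) :
    FF n (2 * n + 1 + d) 0 ^ 2 ≤ 4 / 3 * (2 ^ n * (n.factorial : ℝ)) ^ 2 := by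
  obtain ⟨k, rfl⟩ : ∃ k, n = k + 1 := ⟨n - 1, by omega⟩
  set a := 2 * ((k + 1 : ℕ) : ℝ) + 1 + d with ha
  have hk : (0 : ℝ) ≤ k := Nat.cast_nonneg k
  have ha' : a = 2 * k + 3 + d := by rw [ha]; push_cast; ring
  have hpos : 0 < a - 0 ^ 2 := by rw [ha']; nlinarith
  have e := rr_sq a 0 hpos
  have hr := rr_pos a 0 hpos
  set r := rr a 0
  simp only [ne_eq, OfNat.ofNat_ne_zero, not_false_eq_true, zero_pow, sub_zero] at e hpos
  have hF : FF (k + 1) a 0 = (r ^ 3 / 2 + (2 * k + 3) * r) * hh (k + 1) 0 ^ 2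
      + r * (2 * (k + 1) * hh k 0) ^ 2 := by
    simp only [FF, yy, zz, r, Nat.add_sub_cancel]; push_cast; simp only [ne_eq, OfNat.ofNat_ne_zero, not_false_eq_true, zero_pow, neg_zero, zero_div, Real.exp_zero]; ring
  rw [hF]
  have b1 := hh_at_zero (k + 1)
  have b0 := hh_at_zero k
  set G := (2 ^ (k + 1) * ((k + 1).factorial : ℝ)) with hG
  have hG' : G = 2 * (k + 1) * (2 ^ k * (k.factorial : ℝ)) := by
    rw [hG, Nat.factorial_succ]; push_cast; ring
  have hra : r ^ 2 = 1 / a := by field_simp; linarith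
  rcases hh_zero_or k with h | h
  · rw [h]
    have : ((r ^ 3 / 2 + (2 * k + 3) * r) * hh (k + 1) 0 ^ 2 + r * (2 * (k + 1) * 0) ^ 2) ^ 2
      = (r ^ 2 * (r ^ 2 / 2 + (2 * k + 3)) ^ 2) * (hh (k + 1) 0 ^ 2) ^ 2 := by ring
    rw [this]
    have c : r ^ 2 * (r ^ 2 / 2 + (2 * k + 3)) ^ 2 ≤ 4 / 3 * (3 / 2 * ((k + 1 : ℕ) : ℝ) + 1) := by
      rw [hra]
      have l1 : 1 / a ≤ 1 / 4 := by
        apply one_div_le_one_div_of_le <;> linarith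
      have l2 : (1 / a / 2 + (2 * k + 3)) ^ 2 ≤ (1 / 8 + (2 * k + 3)) ^ 2 := by
        have : 0 < 1 / a := by positivity
        apply pow_le_pow_left₀ (by positivity); linarith
      rw [one_div, inv_mul_le_iff₀ hpos]
      rw [one_div] at l2
      refine l2.trans ?_
      push_cast
      rw [ha']
      nlinarith
    calc _ ≤ (4 / 3 * (3 / 2 * ((k + 1 : ℕ) : ℝ) + 1)) * (hh (k + 1) 0 ^ 2) ^ 2 := by gcongr
      _ ≤ _ := by linarith
  · rw [h]
    have : ((r ^ 3 / 2 + (2 * k + 3) * r) * 0 ^ 2 + r * (2 * (k + 1) * hh k 0) ^ 2) ^ 2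
      = (4 * (k + 1) ^ 2 * r ^ 2) * (4 * (k + 1) ^ 2 * (hh k 0 ^ 2) ^ 2) := by ring
    rw [this]
    have c : 4 * ((k : ℝ) + 1) ^ 2 * r ^ 2 ≤ 4 / 3 * (3 / 2 * k + 1) := by
      rw [hra, mul_one_div, div_le_iff₀ hpos, ha']
      nlinarith
    calc _ ≤ (4 / 3 * (3 / 2 * (k : ℝ) + 1)) * (4 * (k + 1) ^ 2 * (hh k 0 ^ 2) ^ 2) := by gcongr
      _ = 4 / 3 * (4 * (k + 1) ^ 2) * ((hh k 0 ^ 2) ^ 2 * (3 / 2 * k + 1)) := by ring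
      _ ≤ 4 / 3 * (4 * (k + 1) ^ 2) * (2 ^ k * (k.factorial : ℝ)) ^ 2 := by gcongr
      _ = _ := by rw [hG']; ring

theorem yy_bulk (n : ℕ) (hn : 1 ≤ n) (x : ℝ) (hx : 0 ≤ x) (hx2 : x ^ 2 ≤ 2 * n - 1) :
    yy n x ^ 2 ≤ 2 ^ n * (n.factorial : ℝ) := by
  have hn' : (1 : ℝ) ≤ n := by exact_mod_cast hn
  obtain ⟨d, hd, hde⟩ := delta_exists (2 * n + 1) (by linarith)
  set a := 2 * (n : ℝ) + 1 + d with ha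
  have hanti : AntitoneOn (FF n a) (Set.Icc 0 x) := by
    have hq : ∀ u ∈ Set.Icc 0 x, u ^ 2 ≤ 2 * n - 1 := fun u hu =>
      (pow_le_pow_left₀ hu.1 hu.2 2).trans hx2
    have hD : ∀ u ∈ Set.Icc 0 x, _ := fun u hu => FF_deriv n d u (by linarith [hq u hu])
    apply antitoneOn_of_deriv_nonpos (convex_Icc 0 x)
    · exact fun u hu => (hD u hu).continuousAt.continuousWithinAt
    · exact fun u hu => (hD u (interior_subset hu)).differentiableAt.differentiableWithinAt
    · intro u hu
      have hu := interior_subset hu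
      rw [(hD u hu).deriv]
      have hp : 0 < a - u ^ 2 := by linarith [hq u hu]
      have e := rr_sq a u hp
      have hr := rr_pos a u hp
      rw [← ha]
      set r := rr a u
      have hr2 : r ^ 2 ≤ 1 / (d + 2) := by
        rw [le_div_iff₀ (by linarith)]
        have : d + 2 ≤ a - u ^ 2 := by linarith [hq u hu]
        calc _ ≤ r ^ 2 * (a - u ^ 2) := by gcongr
          _ = 1 := e
      have m : 9 / 2 * r ^ 2 + 15 / 2 * u ^ 2 * r ^ 4 - 2 * d ≤ 0 := by
        have s1 : 15 / 2 * u ^ 2 * r ^ 4 ≤ 15 / 2 * (2 * n - 1) * (1 / (d + 2)) ^ 2 := by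
          have : r ^ 4 = (r ^ 2) ^ 2 := by ring
          rw [this]
          have := hq u hu
          have h15 : 0 ≤ 15 / 2 * (2 * (n : ℝ) - 1) := by linarith
          gcongr
        have s2 : 9 / 2 * (1 / (d + 2)) + 15 / 2 * (2 * n - 1) * (1 / (d + 2)) ^ 2 = 2 * d := by
          have : d + 2 ≠ 0 := by linarith
          field_simp
          linarith
        linarith
      have hu0 := hu.1
      apply mul_nonpos_of_nonpos_of_nonneg _ (sq_nonneg _)
      exact mul_nonpos_of_nonneg_of_nonpos (by positivity) m
  have hle := hanti (Set.left_mem_Icc.2 hx) (Set.right_mem_Icc.2 hx) hx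
  have h0 := FF_zero n hn d hd
  rw [← ha] at h0
  have hp : 0 < a - x ^ 2 := by linarith
  have e := rr_sq a x hp
  have hr := rr_pos a x hp
  obtain ⟨t, ht⟩ : ∃ t, a - x ^ 2 = d + 2 + t := ⟨a - x ^ 2 - d - 2, by ring⟩
  have ht0 : 0 ≤ t := by linarith
  have kp := key_poly d t hd ht0
  set r := rr a x with hrdef
  set K := r ^ 3 / 2 + 5 / 4 * x ^ 2 * r ^ 5 + (2 * n + 1 - x ^ 2) * r with hK
  have hKF : K * yy n x ^ 2 ≤ FF n a x := by
    have : FF n a x - K * yy n x ^ 2 = r * (zz n x - x * r ^ 2 * yy n x / 2) ^ 2 := by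
      unfold FF; rw [hK, ← hrdef]; ring
    have h2 : 0 ≤ r * (zz n x - x * r ^ 2 * yy n x / 2) ^ 2 := by positivity
    linarith
  have hKpos : 0 ≤ K := by
    have : 0 ≤ 2 * (n : ℝ) + 1 - x ^ 2 := by linarith
    positivity
  set q := d + 2 + t with hq
  have hq0 : 0 < q := by linarith
  rw [ht] at e
  have hKe : K = r ^ 5 * ((d + 2) * (1 / 2 + d * (d + 2) / 3) - 3 / 4 * q
      + (2 + t) * q ^ 2) := by
    have hx' : x ^ 2 = a - q := by linarith
    have h5 : 5 / 4 * a = (d + 2) * (1 / 2 + d * (d + 2) / 3) := by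
      rw [ha]; linarith
    have hN : 2 * (n : ℝ) + 1 - x ^ 2 = 2 + t := by linarith
    rw [hK, hN, hx', ← h5]
    linear_combination (-r ^ 3 / 2 - (2 + t) * r * (r ^ 2 * q + 1)) * e
  have hK2 : 4 / 3 ≤ K ^ 2 := by
    have h10 : r ^ 10 * q ^ 5 = 1 := by
      calc r ^ 10 * q ^ 5 = (r ^ 2 * q) ^ 5 := by ring
        _ = 1 := by rw [e]; norm_num
    rw [hKe, mul_pow]
    have h11 : 0 ≤ r ^ 10 := by positivity
    have h12 := mul_le_mul_of_nonneg_left kp h11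
    rw [← pow_mul]
    norm_num
    set B := (d + 2) * (1 / 2 + d * (d + 2) / 3) - 3 / 4 * q + (2 + t) * q ^ 2
    have h13 : r ^ 10 * (4 * q ^ 5) = 4 := by linear_combination 4 * h10
    rw [h13] at h12
    have h14 : r ^ 10 * (3 * B ^ 2) = 3 * (r ^ 10 * B ^ 2) := by ring
    linarith
  have hG : 0 < 2 ^ n * (n.factorial : ℝ) := by positivity
  have hfin : (K * yy n x ^ 2) ^ 2 ≤ 4 / 3 * (2 ^ n * (n.factorial : ℝ)) ^ 2 := by
    refine (pow_le_pow_left₀ (by positivity) (hKF.trans hle) 2).trans h0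
  rw [mul_pow] at hfin
  have : (yy n x ^ 2) ^ 2 ≤ (2 ^ n * (n.factorial : ℝ)) ^ 2 := by
    have h1 := mul_le_mul_of_nonneg_right hK2 (sq_nonneg (yy n x ^ 2))
    linarith
  exact (pow_le_pow_iff_left₀ (sq_nonneg _) hG.le two_ne_zero).1 this

theorem yy_bound_nonneg (n : ℕ) (x : ℝ) (hx : 0 ≤ x) :
    yy n x ^ 2 ≤ 2 ^ n * (n.factorial : ℝ) := by
  cases n with
  | zero =>
    simp only [yy, hh_zero, one_mul, pow_zero, Nat.factorial_zero, Nat.cast_one]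
    rw [sq_le_one_iff₀ (Real.exp_pos _).le, Real.exp_le_one_iff]
    nlinarith [sq_nonneg x]
  | succ k =>
    have hk : (0 : ℝ) ≤ k := Nat.cast_nonneg k
    by_cases h : x ^ 2 ≤ 2 * k + 1
    · exact yy_bulk (k + 1) (by omega) x hx (by push_cast; linarith)
    · push Not at h
      set X := √(2 * (k : ℝ) + 1) with hX
      have hX2 : X ^ 2 = 2 * k + 1 := Real.sq_sqrt (by positivity)
      have hX0 : 0 < X := Real.sqrt_pos.2 (by positivity)
      have hXx : X ≤ x := by
        apply le_of_lt; exact lt_of_pow_lt_pow_left₀ 2 hx (by linarith)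
      have hb := yy_bulk (k + 1) (by omega) X hX0.le (by push_cast; linarith)
      have hsq : ∀ u ∈ Set.Ici X, 2 * (k : ℝ) + 1 ≤ u ^ 2 := fun u hu => by
        rw [← hX2]; exact pow_le_pow_left₀ hX0.le hu 2
      have hanti : AntitoneOn (yy (k + 1)) (Set.Ici X) := by
        apply antitoneOn_of_deriv_nonpos (convex_Ici X)
        · exact fun u _ => (yy_deriv _ u).continuousAt.continuousWithinAt
        · exact fun u _ => (yy_deriv _ u).differentiableAt.differentiableWithinAt
        · intro u hu
          have hu := interior_subset hu
          rw [(yy_deriv _ u).deriv]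
          have hu0 : 0 < u := lt_of_lt_of_le hX0 hu
          obtain ⟨p, i⟩ := hh_tail k u hu0 (hsq u hu)
          unfold zz
          apply mul_nonpos_of_nonpos_of_nonneg _ (Real.exp_pos _).le
          simp only [Nat.add_sub_cancel]
          push_cast
          have := mul_le_mul_of_nonneg_right (hsq u hu) p.le
          have h3 : u * (2 * (k + 1) * hh k u - u * hh (k + 1) u) ≤ 0 := by nlinarith
          exact nonpos_of_mul_nonpos_right h3 hu0
      have hle := hanti Set.self_mem_Ici hXx hXx
      have hp : 0 ≤ yy (k + 1) x := by
        have := (hh_tail k x (by linarith) h.le).1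
        unfold yy; positivity
      exact (pow_le_pow_left₀ hp hle 2).trans hb

theorem hh_bound (n : ℕ) (x : ℝ) :
    |hh n x| * Real.exp (-x ^ 2) ≤
      √(n.factorial : ℝ) * √2 ^ n * Real.exp (-x ^ 2 / 2) := by
  have h1 : |hh n x| * Real.exp (-x ^ 2 / 2) ≤ √(n.factorial : ℝ) * √2 ^ n := by
    have h2 : (|hh n x| * Real.exp (-x ^ 2 / 2)) ^ 2 ≤ 2 ^ n * (n.factorial : ℝ) := by
      rcases le_total 0 x with h | h
      · have := yy_bound_nonneg n x h
        unfold yy at this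
        rw [mul_pow] at this ⊢
        rwa [sq_abs]
      · have := yy_bound_nonneg n (-x) (by linarith)
        unfold yy at this
        rw [mul_pow, ← sq_abs, hh_neg, neg_sq] at this
        rwa [mul_pow]
    refine (Real.le_sqrt_of_sq_le h2).trans (le_of_eq ?_)
    rw [Real.sqrt_mul (by positivity), mul_comm]
    congr 1
    rw [Real.sqrt_eq_iff_mul_self_eq (by positivity) (by positivity), ← mul_pow]
    simp
  have e : Real.exp (-x ^ 2) = Real.exp (-x ^ 2 / 2) * Real.exp (-x ^ 2 / 2) := by
    rw [← Real.exp_add]; ring_nf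
  rw [e, ← mul_assoc]
  gcongr

/-- The `n`-th derivative of `exp (-t²/L²)`. -/
noncomputable def DD (L : ℝ) (n : ℕ) (t : ℝ) : ℝ :=
  (-1) ^ n * (L ^ n)⁻¹ * (hh n (t / L) * Real.exp (-(t / L) ^ 2))

theorem DD_deriv (L : ℝ) (n : ℕ) (t : ℝ) : HasDerivAt (DD L n) (DD L (n + 1) t) t := by
  have h1 : HasDerivAt (fun u : ℝ => u / L) (1 / L) t := (hasDerivAt_id t).div_const L
  have h2 : HasDerivAt (fun u => hh n (u / L)) _ t := (hh_deriv n (t / L)).comp t h1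
  have h3 := ((h1.pow 2).neg).exp
  have h4 := (h2.mul h3).const_mul ((-1) ^ n * (L ^ n)⁻¹)
  refine h4.congr_deriv ?_
  unfold DD
  rw [hh_rec]
  simp only [Pi.pow_apply, Pi.neg_apply, pow_succ (-1 : ℝ) n, pow_succ L n, mul_inv]
  simp
  ring

theorem DD_bound (L : ℝ) (hL : 0 < L) (n : ℕ) (t : ℝ) :
    |DD L n t| ≤ (L ^ n)⁻¹ * (√(n.factorial : ℝ) * √2 ^ n * Real.exp (-(t / L) ^ 2 / 2)) := by
  unfold DD
  rw [abs_mul, abs_mul, abs_mul, abs_pow, abs_neg, abs_one, one_pow, one_mul, Real.abs_exp,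
    abs_of_pos (by positivity : 0 < (L ^ n)⁻¹)]
  exact mul_le_mul_of_nonneg_left (hh_bound n (t / L)) (by positivity)

noncomputable def PP (L c : ℝ) (k : Fin 4 → ℕ) (x : EuclideanSpace ℝ (Fin 4)) : ℝ :=
  c * ∏ i, DD L (k i) (x i)

theorem pderiv4_PP (L c : ℝ) (k : Fin 4 → ℕ) (μ : Fin 4) :
    pderiv4 μ (PP L c k) = PP L c (Function.update k μ (k μ + 1)) := by
  funext x
  unfold pderiv4
  have hc : ∀ i : Fin 4, HasFDerivAt (fun x : EuclideanSpace ℝ (Fin 4) => DD L (k i) (x i))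
      (DD L (k i + 1) (x i) • (EuclideanSpace.proj i : EuclideanSpace ℝ (Fin 4) →L[ℝ] ℝ)) x := by
    intro i
    have h2 := (EuclideanSpace.proj i : EuclideanSpace ℝ (Fin 4) →L[ℝ] ℝ).hasFDerivAt (x := x)
    exact HasDerivAt.comp_hasFDerivAt (h₂ := DD L (k i)) x (DD_deriv L (k i) (x i)) h2
  have h := (HasFDerivAt.finsetProd (u := Finset.univ) (fun i _ => hc i)).const_mul c
  have : PP L c k = fun x => c * ∏ i, DD L (k i) (x i) := rfl
  rw [this, h.fderiv]
  unfold PP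
  rw [← Finset.mul_prod_erase Finset.univ _ (Finset.mem_univ μ)]
  have hp : ∏ i ∈ Finset.univ.erase μ, DD L (Function.update k μ (k μ + 1) i) (x i)
      = ∏ i ∈ Finset.univ.erase μ, DD L (k i) (x i) := by
    refine Finset.prod_congr rfl fun i hi => ?_
    rw [Function.update_of_ne (Finset.ne_of_mem_erase hi)]
  rw [hp, Function.update_self]
  simp
  left
  ring

theorem pderiv4_iter (L c : ℝ) (k : Fin 4 → ℕ) (μ : Fin 4) (n : ℕ) :
    (pderiv4 μ)^[n] (PP L c k) = PP L c (Function.update k μ (k μ + n)) := by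
  induction n with
  | zero => simp
  | succ n ih =>
    rw [Function.iterate_succ_apply', ih, pderiv4_PP]
    simp [add_assoc]

theorem mderiv4_PP (L c : ℝ) (w : Fin 4 → ℕ) :
    mderiv4 w (PP L c (fun _ => 0)) = PP L c w := by
  unfold mderiv4
  simp only [pderiv4_iter]
  congr 1
  funext i
  fin_cases i <;> simp [Function.update]

/-- Bound on the multi-index derivatives of the Gaussian:
`|∂^w e^{-(|q|²+m²)/Λ²}| ≤ 1.087 Λ^{-|w|} √(w!) 2^{|w|/2} e^{-|q|²/(2Λ²)} e^{-m²/Λ²}`. -/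
theorem stmt_6 (w : Fin 4 → ℕ) (q : EuclideanSpace ℝ (Fin 4)) (Λ m : ℝ)
    (hΛ : 0 < Λ) (hm : 0 ≤ m) :
    |mderiv4 w (fun x => Real.exp (-(‖x‖ ^ 2 + m ^ 2) / Λ ^ 2)) q| ≤
      1.087 * Λ ^ (-(∑ μ, w μ : ℤ)) * Real.sqrt (∏ μ, Nat.factorial (w μ)) *
        Real.sqrt 2 ^ (∑ μ, w μ) * Real.exp (-‖q‖ ^ 2 / (2 * Λ ^ 2)) *
        Real.exp (-m ^ 2 / Λ ^ 2) := by
  have hf : (fun x : EuclideanSpace ℝ (Fin 4) => Real.exp (-(‖x‖ ^ 2 + m ^ 2) / Λ ^ 2))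
      = PP Λ (Real.exp (-m ^ 2 / Λ ^ 2)) (fun _ => 0) := by
    funext x
    simp only [PP, DD, hh_zero, pow_zero, inv_one, one_mul]
    rw [← Real.exp_sum, ← Real.exp_add, EuclideanSpace.real_norm_sq_eq]
    congr 1
    simp only [Fin.sum_univ_four, div_pow]
    ring
  rw [hf, mderiv4_PP]
  unfold PP
  rw [abs_mul, Real.abs_exp, Finset.abs_prod]
  have h1 : ∏ i, |DD Λ (w i) (q i)| ≤ ∏ i, ((Λ ^ (w i))⁻¹ *
      (√((w i).factorial : ℝ) * √2 ^ (w i) * Real.exp (-(q i / Λ) ^ 2 / 2))) :=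
    Finset.prod_le_prod (fun _ _ => abs_nonneg _) (fun i _ => DD_bound Λ hΛ (w i) (q i))
  have e1 : Λ ^ (-(∑ μ, w μ : ℤ)) = ∏ i, (Λ ^ (w i))⁻¹ := by
    rw [Finset.prod_inv_distrib, Finset.prod_pow_eq_pow_sum, zpow_neg, ← Nat.cast_sum,
      zpow_natCast]
  have e2 : √((∏ μ, Nat.factorial (w μ) : ℕ) : ℝ) = ∏ i, √((w i).factorial : ℝ) := by
    rw [Nat.cast_prod]
    simp only [Fin.prod_univ_four]
    rw [Real.sqrt_mul (by positivity), Real.sqrt_mul (by positivity),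
      Real.sqrt_mul (by positivity)]
  have e3 : Real.exp (-‖q‖ ^ 2 / (2 * Λ ^ 2)) = ∏ i, Real.exp (-(q i / Λ) ^ 2 / 2) := by
    rw [← Real.exp_sum, EuclideanSpace.real_norm_sq_eq]
    congr 1
    simp only [Fin.sum_univ_four, div_pow]
    field_simp
    ring
  have e4 : √2 ^ (∑ μ, w μ) = ∏ i, √2 ^ (w i) := by
    rw [Finset.prod_pow_eq_pow_sum]
  rw [Finset.prod_mul_distrib, Finset.prod_mul_distrib, Finset.prod_mul_distrib, ← e1, ← e2,
    ← e3, ← e4] at h1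
  push_cast at h1 ⊢
  set E := Real.exp (-m ^ 2 / Λ ^ 2)
  have hE : 0 < E := Real.exp_pos _
  set B := Λ ^ (-(∑ μ, w μ : ℤ)) * (√(∏ μ, (Nat.factorial (w μ) : ℝ)) *
        √2 ^ (∑ μ, w μ) * Real.exp (-‖q‖ ^ 2 / (2 * Λ ^ 2))) with hB
  have hB0 : 0 ≤ B := by positivity
  calc _ ≤ E * B := mul_le_mul_of_nonneg_left h1 hE.le
    _ ≤ 1.087 * (E * B) := by
      have : 0 ≤ E * B := by positivity
      linarith
    _ = _ := by rw [hB]; ring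
end

section
/- Let $d,L\in\mathbb{N}$, $\Lambda>0$, $m>0$, $P\ge 0$, and set $\kappa:=\max(\Lambda,m)$. Then $\sum_{\mu=0}^{d}\frac{1}{\sqrt{\mu!}}\int_{\mathbb{R}^4}\frac{d^4k}{(2\pi)^4\,\Lambda^4}\; e^{-\frac{|k|^2}{2\Lambda^2}}\,\Big(\frac{P+|k|}{\Lambda}\Big)^{\mu}\,\sum_{\lambda=0}^{L}\frac{\log^{\lambda}\big(\max(\tfrac{P+|k|}{\kappa},\tfrac{\kappa}{m})\big)}{2^{\lambda}\lambda!} \;\le\; 2^{d}\,\sum_{\mu=0}^{d}\frac{1}{\sqrt{\mu!}}\Big(\frac{P}{\Lambda}\Big)^{\mu}\,\sum_{\lambda=0}^{L}\frac{\log^{\lambda}\big(\max(\tfrac{P}{\kappa},\tfrac{\kappa}{m})\big)+\sqrt{\lambda!}}{2^{\lambda}\lambda!}$. -/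
theorem aux_exp_sum (u v : ℝ) (hu : 0 ≤ u) (hv : 0 ≤ v) (N : ℕ) :
    ∑ l ∈ Finset.range N, (u + v) ^ l / (Nat.factorial l : ℝ) ≤
      (∑ l ∈ Finset.range N, u ^ l / (Nat.factorial l : ℝ)) * Real.exp v := by
  have h1 : ∀ l ∈ Finset.range N, (u + v) ^ l / (Nat.factorial l : ℝ) =
      ∑ k ∈ Finset.range (l + 1), (u ^ k / (Nat.factorial k : ℝ)) *
        (v ^ (l - k) / (Nat.factorial (l - k) : ℝ)) := by
    intro l _
    rw [add_pow, Finset.sum_div]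
    refine Finset.sum_congr rfl fun k hk => ?_
    have hk' : k ≤ l := Nat.lt_succ_iff.mp (Finset.mem_range.mp hk)
    rw [Nat.cast_choose ℝ hk']
    have a1 : (Nat.factorial l : ℝ) ≠ 0 := by positivity
    have a2 : (Nat.factorial k : ℝ) ≠ 0 := by positivity
    have a3 : (Nat.factorial (l - k) : ℝ) ≠ 0 := by positivity
    field_simp
  rw [Finset.sum_congr rfl h1, Finset.sum_range_diag_flip N
    (fun k j => (u ^ k / (Nat.factorial k : ℝ)) * (v ^ j / (Nat.factorial j : ℝ))),
    Finset.sum_mul]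
  refine Finset.sum_le_sum fun i _ => ?_
  rw [← Finset.mul_sum]
  exact mul_le_mul_of_nonneg_left (Real.sum_le_exp_of_nonneg hv _) (by positivity)

theorem aux_pow (x : ℝ) (hx : 0 ≤ x) (n : ℕ) :
    x ^ n ≤ √(2 ^ n * (Nat.factorial n : ℝ)) * Real.exp (x ^ 2 / 4) := by
  have h := Real.pow_div_factorial_le_exp (x ^ 2 / 2) (by positivity) n
  have hf : (0 : ℝ) < Nat.factorial n := by positivity
  rw [div_le_iff₀ hf, div_pow, div_le_iff₀ (by positivity)] at h
  refine (sq_le_sq₀ (by positivity) (by positivity)).mp ?_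
  rw [mul_pow, Real.sq_sqrt (by positivity), ← Real.exp_nat_mul]
  have e : ((2 : ℕ) : ℝ) * (x ^ 2 / 4) = x ^ 2 / 2 := by push_cast; ring
  rw [e]
  calc (x ^ n) ^ 2 = (x ^ 2) ^ n := by ring
    _ ≤ _ := h
    _ = _ := by ring

theorem aux_choose (j n : ℕ) :
    ((j + n).choose j : ℝ) * √(2 ^ n * (Nat.factorial n : ℝ)) * √(Nat.factorial j : ℝ) ≤
      2 ^ (j + n) * √(Nat.factorial (j + n) : ℝ) := by
  refine (sq_le_sq₀ (by positivity) (by positivity)).mp ?_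
  rw [mul_pow, mul_pow, mul_pow, Real.sq_sqrt (by positivity), Real.sq_sqrt (by positivity),
    Real.sq_sqrt (by positivity)]
  have h1 : ((j + n).choose j : ℝ) * Nat.factorial j * Nat.factorial n
      = Nat.factorial (j + n) := by
    have := Nat.choose_mul_factorial_mul_factorial (Nat.le_add_right j n)
    rw [Nat.add_sub_cancel_left] at this
    exact_mod_cast this
  have h2 : ((j + n).choose j : ℝ) ≤ 2 ^ (j + n) := by
    exact_mod_cast Nat.choose_le_two_pow (j + n) j
  have h3 : (2 : ℝ) ^ n ≤ 2 ^ (j + n) := pow_le_pow_right₀ (by norm_num) (by omega)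
  calc ((j + n).choose j : ℝ) ^ 2 * (2 ^ n * (Nat.factorial n : ℝ)) * (Nat.factorial j : ℝ)
      = ((j + n).choose j : ℝ) * 2 ^ n *
        (((j + n).choose j : ℝ) * Nat.factorial j * Nat.factorial n) := by ring
    _ = ((j + n).choose j : ℝ) * 2 ^ n * Nat.factorial (j + n) := by rw [h1]
    _ ≤ 2 ^ (j + n) * 2 ^ (j + n) * Nat.factorial (j + n) := by gcongr
    _ = _ := by ring

theorem aux_binom (p x : ℝ) (hp : 0 ≤ p) (hx : 0 ≤ x) (μ d : ℕ) (hμ : μ ≤ d) :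
    (p + x) ^ μ ≤ √(Nat.factorial μ : ℝ) * (2 ^ μ * Real.exp (x ^ 2 / 4) *
      ∑ j ∈ Finset.range (d + 1), (1 / √(Nat.factorial j : ℝ)) * p ^ j) := by
  have hsub : Finset.range (μ + 1) ⊆ Finset.range (d + 1) :=
    Finset.range_subset_range.mpr (by omega)
  have hs : ∑ j ∈ Finset.range (μ + 1), (1 / √(Nat.factorial j : ℝ)) * p ^ j ≤
      ∑ j ∈ Finset.range (d + 1), (1 / √(Nat.factorial j : ℝ)) * p ^ j :=
    Finset.sum_le_sum_of_subset_of_nonneg hsub fun _ _ _ => by positivity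
  refine le_trans ?_ (mul_le_mul_of_nonneg_left (mul_le_mul_of_nonneg_left hs (by positivity))
    (by positivity))
  rw [add_pow, Finset.mul_sum, Finset.mul_sum]
  refine Finset.sum_le_sum fun j hj => ?_
  have hj' : j ≤ μ := Nat.lt_succ_iff.mp (Finset.mem_range.mp hj)
  obtain ⟨n, rfl⟩ := Nat.exists_eq_add_of_le hj'
  rw [Nat.add_sub_cancel_left]
  have h1 := aux_choose j n
  have h2 := aux_pow x hx n
  have hq : 0 < √(Nat.factorial j : ℝ) := by positivity
  rw [← le_div_iff₀ hq] at h1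
  calc p ^ j * x ^ n * ((j + n).choose j : ℝ)
      ≤ p ^ j * (√(2 ^ n * (Nat.factorial n : ℝ)) * Real.exp (x ^ 2 / 4)) *
        ((j + n).choose j : ℝ) := by gcongr
    _ = p ^ j * Real.exp (x ^ 2 / 4) *
        (((j + n).choose j : ℝ) * √(2 ^ n * (Nat.factorial n : ℝ))) := by ring
    _ ≤ p ^ j * Real.exp (x ^ 2 / 4) *
        (2 ^ (j + n) * √(Nat.factorial (j + n) : ℝ) / √(Nat.factorial j : ℝ)) := by gcongr
    _ = _ := by ring

theorem aux_log (Λ m P k : ℝ) (hΛ : 0 < Λ) (hm : 0 < m) (hk : 0 ≤ k) :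
    0 ≤ Real.log (max (P / max Λ m) (max Λ m / m)) ∧
    0 ≤ Real.log (max ((P + k) / max Λ m) (max Λ m / m)) ∧
    Real.log (max ((P + k) / max Λ m) (max Λ m / m)) ≤
      Real.log (max (P / max Λ m) (max Λ m / m)) + k / Λ := by
  have hκ : 0 < max Λ m := lt_max_of_lt_left hΛ
  have h1 : 1 ≤ max Λ m / m := (one_le_div hm).mpr (le_max_right _ _)
  have hM : 1 ≤ max (P / max Λ m) (max Λ m / m) := le_max_of_le_right h1
  have hM' : 1 ≤ max ((P + k) / max Λ m) (max Λ m / m) := le_max_of_le_right h1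
  refine ⟨Real.log_nonneg hM, Real.log_nonneg hM', ?_⟩
  have hx : 0 ≤ k / Λ := by positivity
  have hkk : k / max Λ m ≤ k / Λ := by gcongr; exact le_max_left _ _
  rw [Real.log_le_iff_le_exp (by linarith), Real.exp_add, Real.exp_log (by linarith)]
  have he := Real.add_one_le_exp (k / Λ)
  set M := max (P / max Λ m) (max Λ m / m) with hMdef
  have hmx : max ((P + k) / max Λ m) (max Λ m / m) ≤ M + k / Λ := by
    refine max_le ?_ ?_
    · rw [add_div]; exact add_le_add (le_max_left _ _) hkk
    · linarith [le_max_right (P / max Λ m) (max Λ m / m)]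
  nlinarith

theorem aux_gauss (Λ : ℝ) (hΛ : 0 < Λ) :
    ∫ k : EuclideanSpace ℝ (Fin 4), Real.exp (-(3 / (16 * Λ ^ 2)) * ‖k‖ ^ 2) =
      (Real.pi / (3 / (16 * Λ ^ 2))) ^ 2 := by
  rw [GaussianFourier.integral_rexp_neg_mul_sq_norm (by positivity)]
  rw [finrank_euclideanSpace_fin]
  norm_num

theorem aux_const (Λ : ℝ) (hΛ : 0 < Λ) :
    (1 / ((2 * Real.pi) ^ 4 * Λ ^ 4)) *
      (Real.exp 1 * (Real.pi / (3 / (16 * Λ ^ 2))) ^ 2) ≤ 1 / 2 := by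
  have hpi := Real.pi_gt_d2
  have he := Real.exp_one_lt_d9
  have e : (1 / ((2 * Real.pi) ^ 4 * Λ ^ 4)) *
      (Real.exp 1 * (Real.pi / (3 / (16 * Λ ^ 2))) ^ 2) =
      16 * Real.exp 1 / (9 * Real.pi ^ 2) := by
    have := Real.pi_pos
    field_simp
    norm_num
  rw [e, div_le_iff₀ (by positivity)]
  nlinarith

theorem aux_lsum (Λ m P k : ℝ) (L : ℕ) (hΛ : 0 < Λ) (hm : 0 < m) (hk : 0 ≤ k) :
    ∑ l ∈ Finset.range (L + 1),
      Real.log (max ((P + k) / max Λ m) (max Λ m / m)) ^ l / (2 ^ l * (Nat.factorial l : ℝ)) ≤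
    (∑ l ∈ Finset.range (L + 1),
      (Real.log (max (P / max Λ m) (max Λ m / m)) ^ l + Real.sqrt (Nat.factorial l)) /
            (2 ^ l * (Nat.factorial l : ℝ))) * Real.exp (k / Λ / 2) := by
  obtain ⟨h0, h1, h2⟩ := aux_log Λ m P k hΛ hm hk
  set a := Real.log (max (P / max Λ m) (max Λ m / m))
  set b := Real.log (max ((P + k) / max Λ m) (max Λ m / m))
  have h3 := aux_exp_sum (a / 2) (k / Λ / 2) (by positivity) (by positivity) (L + 1)
  refine le_trans ?_ (h3.trans ?_)
  · refine Finset.sum_le_sum fun l _ => ?_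
    rw [← div_div, ← div_pow]
    gcongr
    linarith
  · refine mul_le_mul_of_nonneg_right (Finset.sum_le_sum fun l _ => ?_) (by positivity)
    rw [div_pow, div_div]
    gcongr
    linarith [Real.sqrt_nonneg (Nat.factorial l : ℝ)]

theorem aux_point (Λ p B : ℝ) (k Q S : ℝ) (μ d : ℕ) (hμ : μ ≤ d) (hΛ : 0 < Λ) (hp : 0 ≤ p)
    (hk : 0 ≤ k) (hQ : Q = p + k / Λ) (hB : 0 ≤ B) (hS : S ≤ B * Real.exp (k / Λ / 2)) :
    Real.exp (-k ^ 2 / (2 * Λ ^ 2)) * Q ^ μ * S ≤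
      (√(Nat.factorial μ : ℝ) * 2 ^ μ *
        (∑ j ∈ Finset.range (d + 1), (1 / √(Nat.factorial j : ℝ)) * p ^ j) * B * Real.exp 1) *
      Real.exp (-(3 / (16 * Λ ^ 2)) * k ^ 2) := by
  have hx : 0 ≤ k / Λ := by positivity
  have h1 := aux_binom p (k / Λ) hp hx μ d hμ
  subst hQ
  set A := ∑ j ∈ Finset.range (d + 1), (1 / √(Nat.factorial j : ℝ)) * p ^ j with hA
  have hA0 : 0 ≤ A := Finset.sum_nonneg fun _ _ => by positivity
  have e1 : -k ^ 2 / (2 * Λ ^ 2) = -(k / Λ) ^ 2 / 2 := by field_simp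
  have e2 : -(3 / (16 * Λ ^ 2)) * k ^ 2 = -(3 / 16) * (k / Λ) ^ 2 := by field_simp
  rw [e1, e2]
  set x := k / Λ
  calc Real.exp (-x ^ 2 / 2) * (p + x) ^ μ * S
      ≤ Real.exp (-x ^ 2 / 2) * (p + x) ^ μ * (B * Real.exp (x / 2)) :=
        mul_le_mul_of_nonneg_left hS (by positivity)
    _ ≤ Real.exp (-x ^ 2 / 2) * (√(Nat.factorial μ : ℝ) * (2 ^ μ * Real.exp (x ^ 2 / 4) * A)) *
        (B * Real.exp (x / 2)) := by gcongr
    _ = (√(Nat.factorial μ : ℝ) * 2 ^ μ * A * B) *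
        (Real.exp (-x ^ 2 / 2) * Real.exp (x ^ 2 / 4) * Real.exp (x / 2)) := by ring
    _ ≤ (√(Nat.factorial μ : ℝ) * 2 ^ μ * A * B) *
        (Real.exp 1 * Real.exp (-(3 / 16) * x ^ 2)) := by
        rw [← Real.exp_add, ← Real.exp_add, ← Real.exp_add]
        refine mul_le_mul_of_nonneg_left (Real.exp_le_exp.mpr ?_) (by positivity)
        nlinarith [sq_nonneg (x - 4)]
    _ = _ := by ring

/-- The momentum-space Gaussian integral estimate used for the first term of the flow
equation: integrating against the Gaussian `e^{-|k|²/(2Λ²)}` (with the normalization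
`∫_k = ∫ d⁴k/(2π)⁴` and an extra factor `Λ⁻⁴`) is bounded by `2^d` times the integrand
with `k = 0`, up to the additive `√λ!` terms. -/
theorem stmt_8 (d L : ℕ) (Λ m P : ℝ) (hΛ : 0 < Λ) (hm : 0 < m) (hP : 0 ≤ P) :
    ∑ μ ∈ Finset.range (d + 1), (1 / Real.sqrt (Nat.factorial μ)) *
      ((1 / ((2 * Real.pi) ^ 4 * Λ ^ 4)) *
        ∫ k : EuclideanSpace ℝ (Fin 4),
          Real.exp (-‖k‖ ^ 2 / (2 * Λ ^ 2)) * ((P + ‖k‖) / Λ) ^ μ *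
            ∑ l ∈ Finset.range (L + 1),
              Real.log (max ((P + ‖k‖) / max Λ m) (max Λ m / m)) ^ l /
                (2 ^ l * (Nat.factorial l : ℝ))) ≤
      2 ^ d * ∑ μ ∈ Finset.range (d + 1), (1 / Real.sqrt (Nat.factorial μ)) * (P / Λ) ^ μ *
        ∑ l ∈ Finset.range (L + 1),
          (Real.log (max (P / max Λ m) (max Λ m / m)) ^ l + Real.sqrt (Nat.factorial l)) /
            (2 ^ l * (Nat.factorial l : ℝ)) := by
  have hp : 0 ≤ P / Λ := by positivity
  set B := ∑ l ∈ Finset.range (L + 1),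
          (Real.log (max (P / max Λ m) (max Λ m / m)) ^ l + Real.sqrt (Nat.factorial l)) /
            (2 ^ l * (Nat.factorial l : ℝ)) with hB
  have ha := (aux_log Λ m P 0 hΛ hm le_rfl).1
  have hB0 : 0 ≤ B := Finset.sum_nonneg fun _ _ => by positivity
  rw [← Finset.sum_mul]
  set A := ∑ j ∈ Finset.range (d + 1), (1 / √(Nat.factorial j : ℝ)) * (P / Λ) ^ j with hA
  have hA0 : 0 ≤ A := Finset.sum_nonneg fun _ _ => by positivity
  have hG := aux_gauss Λ hΛ
  have hint : MeasureTheory.Integrable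
      (fun k : EuclideanSpace ℝ (Fin 4) => Real.exp (-(3 / (16 * Λ ^ 2)) * ‖k‖ ^ 2)) := by
    by_contra hn
    rw [MeasureTheory.integral_undef hn] at hG
    have : 0 < (Real.pi / (3 / (16 * Λ ^ 2))) ^ 2 := by
      have := Real.pi_pos
      positivity
    linarith
  have hterm : ∀ μ ∈ Finset.range (d + 1), (1 / Real.sqrt (Nat.factorial μ)) *
      ((1 / ((2 * Real.pi) ^ 4 * Λ ^ 4)) *
        ∫ k : EuclideanSpace ℝ (Fin 4),
          Real.exp (-‖k‖ ^ 2 / (2 * Λ ^ 2)) * ((P + ‖k‖) / Λ) ^ μ *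
            ∑ l ∈ Finset.range (L + 1),
              Real.log (max ((P + ‖k‖) / max Λ m) (max Λ m / m)) ^ l /
                (2 ^ l * (Nat.factorial l : ℝ))) ≤ 2 ^ μ * (A * B * (1 / 2)) := by
    intro μ hμ
    have hμ' : μ ≤ d := Nat.lt_succ_iff.mp (Finset.mem_range.mp hμ)
    have hI := MeasureTheory.integral_mono_of_nonneg
      (μ := (MeasureTheory.volume : MeasureTheory.Measure (EuclideanSpace ℝ (Fin 4))))
      (f := fun k => Real.exp (-‖k‖ ^ 2 / (2 * Λ ^ 2)) * ((P + ‖k‖) / Λ) ^ μ *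
            ∑ l ∈ Finset.range (L + 1),
              Real.log (max ((P + ‖k‖) / max Λ m) (max Λ m / m)) ^ l /
                (2 ^ l * (Nat.factorial l : ℝ)))
      (g := fun k => (√(Nat.factorial μ : ℝ) * 2 ^ μ * A * B * Real.exp 1) *
        Real.exp (-(3 / (16 * Λ ^ 2)) * ‖k‖ ^ 2))
      (Filter.Eventually.of_forall fun k => by
        have := (aux_log Λ m P ‖k‖ hΛ hm (norm_nonneg k)).2.1
        have h2 : 0 ≤ ∑ l ∈ Finset.range (L + 1),
              Real.log (max ((P + ‖k‖) / max Λ m) (max Λ m / m)) ^ l /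
                (2 ^ l * (Nat.factorial l : ℝ)) :=
          Finset.sum_nonneg fun _ _ => by positivity
        show (0 : ℝ) ≤ _
        positivity)
      (hint.const_mul _)
      (Filter.Eventually.of_forall fun k =>
        aux_point Λ (P / Λ) B ‖k‖ _ _ μ d hμ' hΛ hp (norm_nonneg k) (add_div _ _ _) hB0
          (aux_lsum Λ m P ‖k‖ L hΛ hm (norm_nonneg k)))
    rw [MeasureTheory.integral_const_mul, hG] at hI
    have hc := aux_const Λ hΛ
    have hq : 0 < √(Nat.factorial μ : ℝ) := by positivity
    have hpi := Real.pi_pos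
    refine (mul_le_mul_of_nonneg_left (mul_le_mul_of_nonneg_left hI (by positivity))
      (by positivity)).trans ?_
    calc _ = 2 ^ μ * (A * B * ((1 / ((2 * Real.pi) ^ 4 * Λ ^ 4)) *
      (Real.exp 1 * (Real.pi / (3 / (16 * Λ ^ 2))) ^ 2))) * (√(Nat.factorial μ : ℝ) *
        (1 / √(Nat.factorial μ : ℝ))) := by ring
      _ = 2 ^ μ * (A * B * ((1 / ((2 * Real.pi) ^ 4 * Λ ^ 4)) *
      (Real.exp 1 * (Real.pi / (3 / (16 * Λ ^ 2))) ^ 2))) := by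
        rw [mul_one_div_cancel hq.ne', mul_one]
      _ ≤ _ := by gcongr
  refine (Finset.sum_le_sum hterm).trans ?_
  rw [← Finset.sum_mul]
  have hgs : ∑ μ ∈ Finset.range (d + 1), (2 : ℝ) ^ μ ≤ 2 ^ d * 2 := by
    rw [geom_sum_eq (by norm_num), pow_succ]
    norm_num
  calc (∑ μ ∈ Finset.range (d + 1), (2 : ℝ) ^ μ) * (A * B * (1 / 2))
      ≤ (2 ^ d * 2) * (A * B * (1 / 2)) := by gcongr
    _ = _ := by ring
end

section
/- Let $n\ge 1$, let $p_1,\dots,p_{2n}\in\mathbb{R}^4$, let $d,\lambda\in\mathbb{N}$, $\Lambda>0$, $m>0$ and set $\kappa:=\max(\Lambda,m)$. Writing $|\vec p\,|:=|(p_1,\dots,p_{2n})|_{2n}$ and, for $k\in\mathbb{R}^4$, $|\vec p_{2n+2}(k)|:=|(p_1,\dots,p_{2n},k,-k)|_{2n+2}$, one has $\sum_{\mu=0}^{d}\frac{1}{\sqrt{\mu!}}\int_{\mathbb{R}^4}\frac{d^4k}{(2\pi)^4\Lambda^4}\Big(\frac{|\vec p_{2n+2}(k)|}{\Lambda}\Big)^{\mu}\,\log^{\lambda}\Big(\max\big(\tfrac{|\vec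 p_{2n+2}(k)|}{\kappa},\tfrac{\kappa}{m}\big)\Big)\,e^{-\frac{|k|^2}{\Lambda^2}} \;\le\; 2^{d}\,\sum_{\mu=0}^{d}\frac{1}{\sqrt{\mu!}}\Big(\frac{|\vec p\,|}{\Lambda}\Big)^{\mu}\,\Big(\log^{\lambda}\big(\max(\tfrac{|\vec p\,|}{\kappa},\tfrac{\kappa}{m})\big)+\sqrt{\lambda!}\Big)$. -/
/-- The subset-sum norm `|p⃗|_n = max_{J ⊆ {1,…,n}} |∑_{i∈J} p_i|` of a tuple of momenta
in `ℝ⁴`. -/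
noncomputable def subsetNorm {n : ℕ} (p : Fin n → EuclideanSpace ℝ (Fin 4)) : ℝ :=
  (Finset.univ : Finset (Fin n)).powerset.sup'
    ⟨∅, Finset.empty_mem_powerset _⟩ (fun J => ‖∑ i ∈ J, p i‖)

lemma pow_le_sqrt_fact (x : ℝ) (_hx : 0 ≤ x) (a : ℝ) (ha : 0 ≤ a) (l : ℕ) :
    x ^ l * Real.sqrt a ^ l ≤ Real.sqrt (Nat.factorial l) * Real.exp (a * x ^ 2 / 2) := by
  have h := Real.pow_div_factorial_le_exp (a * x ^ 2) (by positivity) l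
  rw [div_le_iff₀ (by positivity)] at h
  have h2 : Real.exp (a * x ^ 2) = Real.exp (a * x ^ 2 / 2) ^ 2 := by
    rw [← Real.exp_nat_mul]; congr 1; push_cast; ring
  apply le_of_sq_le_sq _ (by positivity)
  rw [mul_pow, mul_pow, Real.sq_sqrt (by positivity), ← pow_mul, ← pow_mul, mul_comm l 2,
    pow_mul, pow_mul, Real.sq_sqrt ha, ← mul_pow, ← h2]
  calc (x ^ 2 * a) ^ l = (a * x ^ 2) ^ l := by ring
    _ ≤ _ := h
    _ = _ := by ring

lemma log_le_sqrt_aux (y : ℝ) (hy : 1 ≤ y) :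
    Real.exp 1 * Real.log y ^ 2 / 2 ≤ 2 / Real.exp 1 * y := by
  have h0 : 0 ≤ Real.log y := Real.log_nonneg hy
  have h1 := Real.add_one_le_exp (Real.log y / 2 - 1)
  have h2 : Real.exp (Real.log y / 2 - 1) = Real.sqrt y / Real.exp 1 := by
    rw [Real.exp_sub, ← Real.log_sqrt (by linarith), Real.exp_log (by positivity)]
  rw [h2] at h1
  have he := Real.exp_pos 1
  have h3 : Real.log y * Real.exp 1 ≤ 2 * Real.sqrt y := by
    have : Real.log y / 2 ≤ Real.sqrt y / Real.exp 1 := by linarith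
    rw [le_div_iff₀ he] at this
    linarith
  have h4 : (Real.log y * Real.exp 1) ^ 2 ≤ 4 * y := by
    calc _ ≤ (2 * Real.sqrt y) ^ 2 := by gcongr
      _ = _ := by rw [mul_pow, Real.sq_sqrt (by linarith)]; norm_num
  rw [div_mul_eq_mul_div, le_div_iff₀ he]
  nlinarith

lemma exp_const_le : Real.exp (13 / 5) ≤ 19 := by
  apply le_of_pow_le_pow_left₀ (n := 5) (by norm_num) (by norm_num)
  rw [← Real.exp_nat_mul]
  have : ((5 : ℕ) : ℝ) * (13 / 5) = ((13 : ℕ) : ℝ) * 1 := by norm_num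
  rw [this, Real.exp_nat_mul]
  calc Real.exp 1 ^ 13 ≤ 2.7182818286 ^ 13 := by gcongr; exact Real.exp_one_lt_d9.le
    _ ≤ _ := by norm_num

lemma log_bound (M r : ℝ) (hM : 1 ≤ M) (hr : 0 ≤ r) (l : ℕ) :
    Real.log (M + r) ^ l ≤
      (Real.log M ^ l + Real.sqrt (Nat.factorial l)) * (19 * Real.exp (r ^ 2 / 4)) := by
  have he := Real.exp_pos 1
  have he1 := Real.exp_one_gt_d9
  have hL : 0 ≤ Real.log M := Real.log_nonneg hM
  have hx : 0 ≤ Real.log (M + r) := Real.log_nonneg (by linarith)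
  have hc : Real.exp (r ^ 2 / 4 + 13 / 5) ≤ 19 * Real.exp (r ^ 2 / 4) := by
    rw [Real.exp_add, mul_comm]; gcongr; exact exp_const_le
  rcases le_or_gt M (Real.exp 1 * (1 + l / 4)) with h | h
  · have h1 := pow_le_sqrt_fact (Real.log (M + r)) hx (Real.exp 1) he.le l
    have h2 := log_le_sqrt_aux (M + r) (by linarith)
    have h3 : Real.sqrt (Real.exp 1) ^ l = Real.exp (l / 2) := by
      rw [← Real.exp_half, ← Real.exp_nat_mul]; congr 1; ring
    have h4 : Real.log (M + r) ^ l ≤ Real.sqrt (Nat.factorial l) *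
        Real.exp (2 / Real.exp 1 * (M + r) - l / 2) := by
      rw [Real.exp_sub, ← mul_div_assoc, le_div_iff₀ (by positivity), ← h3]
      refine h1.trans ?_
      gcongr
    have h5 : 2 / Real.exp 1 * (M + r) - l / 2 ≤ r ^ 2 / 4 + 13 / 5 := by
      have a1 : 2 / Real.exp 1 * M ≤ 2 * (1 + l / 4) := by
        rw [div_mul_eq_mul_div, div_le_iff₀ he]; linarith
      have a2 : 2 / Real.exp 1 ≤ 0.75 := by
        rw [div_le_iff₀ he]; linarith
      have a3 : 2 / Real.exp 1 * r ≤ 0.75 * r := by gcongr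
      nlinarith [sq_nonneg (r / 2 - 0.75)]
    calc _ ≤ _ := h4
      _ ≤ Real.sqrt (Nat.factorial l) * (19 * Real.exp (r ^ 2 / 4)) := by
        gcongr
        exact (Real.exp_le_exp.2 h5).trans hc
      _ ≤ _ := by
        gcongr
        have : 0 ≤ Real.log M ^ l := by positivity
        linarith
  · have hl : (0 : ℝ) ≤ l := by positivity
    have hM1 : Real.exp 1 ≤ M := by nlinarith
    have hL1 : 1 ≤ Real.log M := by
      rw [Real.le_log_iff_exp_le (by linarith)]; exact hM1
    have hM0 : 0 < M := by linarith
    have h1 : Real.log (M + r) ≤ Real.log M * Real.exp (r / M) := by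
      have : M + r = M * (1 + r / M) := by field_simp
      rw [this, Real.log_mul (by positivity) (by positivity)]
      have b := Real.log_le_sub_one_of_pos (show 0 < 1 + r / M by positivity)
      have b2 := Real.add_one_le_exp (r / M)
      have b3 : 0 ≤ r / M := by positivity
      nlinarith
    have h2 : l * (r / M) ≤ r ^ 2 / 4 + 13 / 5 := by
      have : l * (r / M) ≤ 1.5 * r := by
        rw [← mul_div_assoc, div_le_iff₀ hM0]
        have : (l : ℝ) ≤ 1.5 * M := by nlinarith
        nlinarith
      nlinarith [sq_nonneg (r / 2 - 1.5)]
    calc _ ≤ (Real.log M * Real.exp (r / M)) ^ l := by gcongr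
      _ = Real.log M ^ l * Real.exp (l * (r / M)) := by rw [mul_pow, ← Real.exp_nat_mul]
      _ ≤ Real.log M ^ l * (19 * Real.exp (r ^ 2 / 4)) := by
        gcongr
        exact (Real.exp_le_exp.2 h2).trans hc
      _ ≤ _ := by
        gcongr
        have : 0 ≤ Real.sqrt (Nat.factorial l) := by positivity
        linarith

lemma poly_bound (q r : ℝ) (hq : 0 ≤ q) (hr : 0 ≤ r) (μ : ℕ) :
    1 / Real.sqrt (Nat.factorial μ) * (q + r) ^ μ ≤
      2 ^ μ * Real.exp (r ^ 2 / 4) *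
        ∑ ν ∈ Finset.range (μ + 1), 1 / Real.sqrt (Nat.factorial ν) * q ^ ν := by
  rw [add_pow, Finset.mul_sum, Finset.mul_sum]
  apply Finset.sum_le_sum
  intro ν hν
  have hν' : ν ≤ μ := by simpa [Nat.lt_succ_iff] using hν
  have hj := pow_le_sqrt_fact r hr (1 / 2) (by norm_num) (μ - ν)
  have hf : (μ.choose ν : ℝ) * (Nat.factorial ν) * (Nat.factorial (μ - ν)) = Nat.factorial μ := by
    exact_mod_cast Nat.choose_mul_factorial_mul_factorial hν'
  set C : ℝ := (μ.choose ν : ℝ) with hC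
  have hC0 : 0 < C := by rw [hC]; exact_mod_cast Nat.choose_pos hν'
  have hCle : Real.sqrt C ≤ Real.sqrt 2 ^ μ := by
    have h1 : C ≤ 2 ^ μ := by rw [hC]; exact_mod_cast Nat.choose_le_two_pow μ ν
    refine Real.sqrt_le_iff.2 ⟨by positivity, ?_⟩
    rw [← pow_mul, mul_comm, pow_mul, Real.sq_sqrt (by norm_num)]
    exact h1
  have hs2 : Real.sqrt (1 / 2) = 1 / Real.sqrt 2 := by
    rw [Real.sqrt_div (by norm_num), Real.sqrt_one]
  have hr2 : r ^ (μ - ν) ≤ Real.sqrt 2 ^ μ *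
      (Real.sqrt (Nat.factorial (μ - ν)) * Real.exp (r ^ 2 / 4)) := by
    rw [hs2, div_pow, one_pow, mul_one_div, div_le_iff₀ (by positivity)] at hj
    have e : (1 / 2 * r ^ 2 / 2 : ℝ) = r ^ 2 / 4 := by ring
    rw [e, mul_comm] at hj
    refine hj.trans ?_
    gcongr
    · exact Real.one_le_sqrt.2 (by norm_num)
    · omega
  have hfs : Real.sqrt (Nat.factorial μ) =
      Real.sqrt C * Real.sqrt (Nat.factorial ν) * Real.sqrt (Nat.factorial (μ - ν)) := by
    rw [← hf, Real.sqrt_mul (by positivity), Real.sqrt_mul (by positivity)]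
  have hCC : Real.sqrt C * Real.sqrt C = C := Real.mul_self_sqrt hC0.le
  have h22 : Real.sqrt 2 ^ μ * Real.sqrt 2 ^ μ = 2 ^ μ := by
    rw [← mul_pow, Real.mul_self_sqrt (by norm_num)]
  have p1 : 0 < Real.sqrt (Nat.factorial ν) := by positivity
  have p2 : 0 < Real.sqrt (Nat.factorial (μ - ν)) := by positivity
  have p3 : 0 < Real.sqrt C := by positivity
  calc 1 / Real.sqrt (Nat.factorial μ) * (q ^ ν * r ^ (μ - ν) * C)
      = (1 / Real.sqrt (Nat.factorial ν) * q ^ ν) * (Real.sqrt C *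
          (r ^ (μ - ν) / Real.sqrt (Nat.factorial (μ - ν)))) := by
        rw [hfs]; nth_rewrite 2 [← hCC]; field_simp
    _ ≤ (1 / Real.sqrt (Nat.factorial ν) * q ^ ν) * (Real.sqrt 2 ^ μ *
          (Real.sqrt 2 ^ μ * Real.exp (r ^ 2 / 4))) := by
        gcongr
        rw [div_le_iff₀ p2]; linarith
    _ = _ := by rw [← h22]; ring

lemma sum_ite_aux {n : ℕ} [DecidableEq (Fin n)] (J : Finset (Fin n))
    (f : Fin n → EuclideanSpace ℝ (Fin 4)) :
    ∑ i ∈ J, f i = ∑ i, if i ∈ J then f i else 0 := by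
  rw [Finset.sum_ite_mem, Finset.univ_inter]

lemma norm_sum_le_subsetNorm {n : ℕ} (p : Fin n → EuclideanSpace ℝ (Fin 4)) (J : Finset (Fin n)) :
    ‖∑ i ∈ J, p i‖ ≤ subsetNorm p :=
  Finset.le_sup' (fun J => ‖∑ i ∈ J, p i‖) (by simp)

lemma subsetNorm_nonneg {n : ℕ} (p : Fin n → EuclideanSpace ℝ (Fin 4)) : 0 ≤ subsetNorm p := by
  simpa using norm_sum_le_subsetNorm p ∅

lemma subsetNorm_snoc_le {n : ℕ} (p : Fin n → EuclideanSpace ℝ (Fin 4))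
    (k : EuclideanSpace ℝ (Fin 4)) :
    subsetNorm (Fin.snoc (Fin.snoc p k : Fin (n + 1) → EuclideanSpace ℝ (Fin 4)) (-k) :
      Fin (n + 1 + 1) → EuclideanSpace ℝ (Fin 4)) ≤ subsetNorm p + ‖k‖ := by
  apply Finset.sup'_le
  intro J _
  classical
  have h1 : ∑ i ∈ J, (Fin.snoc (Fin.snoc p k : Fin (n + 1) → EuclideanSpace ℝ (Fin 4)) (-k) :
      Fin (n + 1 + 1) → EuclideanSpace ℝ (Fin 4)) i =
      ∑ i ∈ Finset.univ.filter (fun i : Fin n => i.castSucc.castSucc ∈ J), p i +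
      ((if (Fin.last n).castSucc ∈ J then k else 0) + (if Fin.last (n+1) ∈ J then -k else 0)) := by
    rw [sum_ite_aux J, Fin.sum_univ_castSucc, Fin.sum_univ_castSucc,
      Finset.sum_filter]
    simp [add_assoc]
  rw [h1]
  refine (norm_add_le _ _).trans (add_le_add (norm_sum_le_subsetNorm p _) ?_)
  split_ifs <;> simp

/-- The Gaussian momentum integral estimate with the subset-sum norm of the extended
momentum tuple `(p₁,…,p_{2n},k,-k)`: integration against `e^{-|k|²/Λ²}` (with the
normalization `∫_k = ∫ d⁴k/(2π)⁴` and an extra factor `Λ⁻⁴`) is bounded by `2^d` times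
the same expression evaluated at `k = 0`, up to the additive `√λ!` term. -/
theorem stmt_9 (n : ℕ) (hn : 1 ≤ n) (p : Fin (2 * n) → EuclideanSpace ℝ (Fin 4))
    (d lam : ℕ) (Λ m : ℝ) (hΛ : 0 < Λ) (hm : 0 < m) :
    ∑ μ ∈ Finset.range (d + 1), (1 / Real.sqrt (Nat.factorial μ)) *
      ((1 / ((2 * Real.pi) ^ 4 * Λ ^ 4)) *
        ∫ k : EuclideanSpace ℝ (Fin 4),
          (subsetNorm (Fin.snoc (Fin.snoc p k) (-k)) / Λ) ^ μ *
            Real.log (max (subsetNorm (Fin.snoc (Fin.snoc p k) (-k)) / max Λ m)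
              (max Λ m / m)) ^ lam *
            Real.exp (-‖k‖ ^ 2 / Λ ^ 2)) ≤
      2 ^ d * ∑ μ ∈ Finset.range (d + 1), (1 / Real.sqrt (Nat.factorial μ)) *
        (subsetNorm p / Λ) ^ μ *
        (Real.log (max (subsetNorm p / max Λ m) (max Λ m / m)) ^ lam +
          Real.sqrt (Nat.factorial lam)) := by
  classical
  have hκ : 0 < max Λ m := lt_max_of_lt_left hΛ
  set κ := max Λ m with hκdef
  have hκΛ : Λ ≤ κ := le_max_left _ _
  have hκm : m ≤ κ := le_max_right _ _
  set P := subsetNorm p with hP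
  have hP0 : 0 ≤ P := subsetNorm_nonneg p
  set M := max (P / κ) (κ / m) with hM
  have hκm1 : 1 ≤ κ / m := (one_le_div hm).2 hκm
  have hM1 : 1 ≤ M := hκm1.trans (le_max_right _ _)
  set A := Real.log M ^ lam + Real.sqrt (Nat.factorial lam) with hA
  have hL : 0 ≤ Real.log M := Real.log_nonneg hM1
  have hA0 : 0 ≤ A := by positivity
  set S := ∑ ν ∈ Finset.range (d + 1), 1 / Real.sqrt (Nat.factorial ν) * (P / Λ) ^ ν with hS
  have hq : 0 ≤ P / Λ := by positivity
  have hS0 : 0 ≤ S := by positivity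
  have hgauss : ∫ k : EuclideanSpace ℝ (Fin 4), Real.exp (-(1 / (2 * Λ ^ 2)) * ‖k‖ ^ 2) =
      (2 * Real.pi * Λ ^ 2) ^ 2 := by
    rw [GaussianFourier.integral_rexp_neg_mul_sq_norm (by positivity)]
    rw [finrank_euclideanSpace_fin]
    norm_num
    field_simp
  have hint : MeasureTheory.Integrable
      (fun k : EuclideanSpace ℝ (Fin 4) => Real.exp (-(1 / (2 * Λ ^ 2)) * ‖k‖ ^ 2)) := by
    apply MeasureTheory.Integrable.of_integral_ne_zero
    rw [hgauss]
    positivity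
  have key : ∀ μ ∈ Finset.range (d + 1), (1 / Real.sqrt (Nat.factorial μ)) *
      ((1 / ((2 * Real.pi) ^ 4 * Λ ^ 4)) *
        ∫ k : EuclideanSpace ℝ (Fin 4),
          (subsetNorm (Fin.snoc (Fin.snoc p k) (-k)) / Λ) ^ μ *
            Real.log (max (subsetNorm (Fin.snoc (Fin.snoc p k) (-k)) / κ) (κ / m)) ^ lam *
            Real.exp (-‖k‖ ^ 2 / Λ ^ 2)) ≤ 2 ^ μ * (S * A / 2) := by
    intro μ hμ
    have hμd : μ ≤ d := by simpa [Nat.lt_succ_iff] using hμ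
    have hpt : ∀ k : EuclideanSpace ℝ (Fin 4),
        (1 / Real.sqrt (Nat.factorial μ)) *
          ((subsetNorm (Fin.snoc (Fin.snoc p k) (-k)) / Λ) ^ μ *
            Real.log (max (subsetNorm (Fin.snoc (Fin.snoc p k) (-k)) / κ) (κ / m)) ^ lam *
            Real.exp (-‖k‖ ^ 2 / Λ ^ 2)) ≤
          (2 ^ μ * S * A * 19) * Real.exp (-(1 / (2 * Λ ^ 2)) * ‖k‖ ^ 2) := by
      intro k
      have hN := subsetNorm_snoc_le p k
      have hN0 := subsetNorm_nonneg (Fin.snoc (Fin.snoc p k : Fin (2 * n + 1) →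
        EuclideanSpace ℝ (Fin 4)) (-k) : Fin (2 * n + 1 + 1) → EuclideanSpace ℝ (Fin 4))
      set N := subsetNorm (Fin.snoc (Fin.snoc p k : Fin (2 * n + 1) →
        EuclideanSpace ℝ (Fin 4)) (-k) : Fin (2 * n + 1 + 1) → EuclideanSpace ℝ (Fin 4))
      set r := ‖k‖ / Λ with hr
      have hr0 : 0 ≤ r := by positivity
      have h1 : N / Λ ≤ P / Λ + r := by
        rw [hr, ← add_div]; gcongr
      have h2 : max (N / κ) (κ / m) ≤ M + r := by
        apply max_le
        · have : N / κ ≤ P / κ + ‖k‖ / κ := by rw [← add_div]; gcongr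
          have h3 : ‖k‖ / κ ≤ r := by rw [hr]; gcongr
          have h4 : P / κ ≤ M := le_max_left _ _
          linarith
        · have h4 : κ / m ≤ M := le_max_right _ _
          linarith
      have h3 : 1 ≤ max (N / κ) (κ / m) := hκm1.trans (le_max_right _ _)
      have h4 : 0 ≤ Real.log (max (N / κ) (κ / m)) := Real.log_nonneg h3
      have h5 : Real.log (max (N / κ) (κ / m)) ^ lam ≤ A * (19 * Real.exp (r ^ 2 / 4)) := by
        refine le_trans ?_ (log_bound M r hM1 hr0 lam)
        gcongr
      have h6 : 1 / Real.sqrt (Nat.factorial μ) * (N / Λ) ^ μ ≤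
          2 ^ μ * Real.exp (r ^ 2 / 4) * S := by
        calc _ ≤ 1 / Real.sqrt (Nat.factorial μ) * (P / Λ + r) ^ μ := by gcongr
          _ ≤ _ := poly_bound _ _ hq hr0 μ
          _ ≤ _ := by
            gcongr
            apply Finset.sum_le_sum_of_subset_of_nonneg
            · apply Finset.range_mono; omega
            · intros; positivity
      have h7 : Real.exp (-(1 / (2 * Λ ^ 2)) * ‖k‖ ^ 2) =
          Real.exp (r ^ 2 / 4) * Real.exp (r ^ 2 / 4) * Real.exp (-‖k‖ ^ 2 / Λ ^ 2) := by
        rw [← Real.exp_add, ← Real.exp_add]; congr 1; rw [hr]; field_simp; ring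
      calc _ = (1 / Real.sqrt (Nat.factorial μ) * (N / Λ) ^ μ) *
            Real.log (max (N / κ) (κ / m)) ^ lam * Real.exp (-‖k‖ ^ 2 / Λ ^ 2) := by ring
        _ ≤ (2 ^ μ * Real.exp (r ^ 2 / 4) * S) * (A * (19 * Real.exp (r ^ 2 / 4))) *
            Real.exp (-‖k‖ ^ 2 / Λ ^ 2) := by gcongr
        _ = _ := by rw [h7]; ring
    have hI := MeasureTheory.integral_mono_of_nonneg (μ := MeasureTheory.volume)
      (Filter.Eventually.of_forall (fun k => ?_)) (hint.const_mul (2 ^ μ * S * A * 19))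
      (Filter.Eventually.of_forall hpt)
    · rw [MeasureTheory.integral_const_mul, MeasureTheory.integral_const_mul, hgauss] at hI
      rw [mul_left_comm, one_div_mul_eq_div, div_le_iff₀ (by positivity)]
      refine hI.trans ?_
      have hpi : 38 ≤ 4 * Real.pi ^ 2 := by nlinarith [Real.pi_gt_d2]
      have e1 : 2 ^ μ * S * A * 19 * (2 * Real.pi * Λ ^ 2) ^ 2 =
        (2 ^ μ * S * A * (2 * Real.pi ^ 2 * Λ ^ 4)) * 38 := by ring
      have e2 : 2 ^ μ * (S * A / 2) * ((2 * Real.pi) ^ 4 * Λ ^ 4) =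
        (2 ^ μ * S * A * (2 * Real.pi ^ 2 * Λ ^ 4)) * (4 * Real.pi ^ 2) := by ring
      rw [e1, e2]
      gcongr
    · have hN0 := subsetNorm_nonneg (Fin.snoc (Fin.snoc p k : Fin (2 * n + 1) →
        EuclideanSpace ℝ (Fin 4)) (-k) : Fin (2 * n + 1 + 1) → EuclideanSpace ℝ (Fin 4))
      have h4 := Real.log_nonneg (hκm1.trans (le_max_right (subsetNorm (Fin.snoc (Fin.snoc p k :
        Fin (2 * n + 1) → EuclideanSpace ℝ (Fin 4)) (-k) :
        Fin (2 * n + 1 + 1) → EuclideanSpace ℝ (Fin 4)) / κ) (κ / m)))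
      simp only [Pi.zero_apply]
      positivity
  refine (Finset.sum_le_sum key).trans ?_
  rw [← Finset.sum_mul, ← Finset.sum_mul]
  have hgeo : ∑ μ ∈ Finset.range (d + 1), (2 : ℝ) ^ μ ≤ 2 * 2 ^ d := by
    rw [geom_sum_eq (by norm_num)]
    have : (0 : ℝ) < 2 ^ d := by positivity
    rw [pow_succ]; norm_num; linarith
  calc _ ≤ (2 * 2 ^ d) * (S * A / 2) := by gcongr
    _ = _ := by ring
end
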